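/- Let M be the DFAwtl over V={a,b} with states Q={q₀,q₁}, initial state q₀, final states F={q₀}, and partial transition function given by δ(q₀,a)=q₁ and δ(q₁,b)=q₀ (δ(q₀,b) and δ(q₁,a) undefined). Then for every n≥0: jc_M(bⁿaⁿ)=n, for every word w∈L(M) of length 2n one has 0 ≤ jc_M(w) ≤ n, and JC_M(2n)=n (JC_M is undefined on odd lengths). -/

import Mathlib

/-- A deterministic finite automaton with translucent letters (DFAwtl):
`delta` is a partial transition function, `start` the initial state,
`accept` the set of final states. -/
structure DFAwtl (Q V : Type*) where
  delta : Q → V → Option Q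
  start : Q
  accept : Set Q

namespace DFAwtl

variable {Q V : Type*}

/-- Sequential step: `(s, a·y) → (p, y)` when `δ(s,a) = p`. -/
def SeqStep (M : DFAwtl Q V) (c c' : Q × List V) : Prop :=
  ∃ a : V, c.2 = a :: c'.2 ∧ M.delta c.1 a = some c'.1

/-- Jumping step: `(s, x·a·y) ↻ (p, x·y)` when `x ≠ ε`, `δ(s,a) = p`, and
`δ(s,b)` is undefined for every letter `b` occurring in `x`. -/
def JumpStep (M : DFAwtl Q V) (c c' : Q × List V) : Prop :=
  ∃ (x y : List V) (a : V), x ≠ [] ∧ c.2 = x ++ a :: y ∧ c'.2 = x ++ y ∧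
    M.delta c.1 a = some c'.1 ∧ ∀ b ∈ x, M.delta c.1 b = none

/-- Either a sequential or a jumping step. -/
def Step (M : DFAwtl Q V) (c c' : Q × List V) : Prop :=
  M.SeqStep c c' ∨ M.JumpStep c c'

/-- Reflexive–transitive closure of sequential steps (the relation `→*`). -/
def SeqSteps (M : DFAwtl Q V) : Q × List V → Q × List V → Prop :=
  Relation.ReflTransGen M.SeqStep

/-- Reflexive–transitive closure of all steps (the relation `⊨*`). -/
def Steps (M : DFAwtl Q V) : Q × List V → Q × List V → Prop :=
  Relation.ReflTransGen M.Step

/-- `StepsN M c c' k` : configuration `c'` is reachable from `c` by a computation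
containing exactly `k` jumping steps. -/
inductive StepsN (M : DFAwtl Q V) : Q × List V → Q × List V → ℕ → Prop
  | refl (c : Q × List V) : StepsN M c c 0
  | seq {c c' c'' : Q × List V} {n : ℕ} :
      M.SeqStep c c' → StepsN M c' c'' n → StepsN M c c'' n
  | jump {c c' c'' : Q × List V} {n : ℕ} :
      M.JumpStep c c' → StepsN M c' c'' n → StepsN M c c'' (n + 1)

/-- The language accepted by `M`. -/
def lang (M : DFAwtl Q V) : Set (List V) :=
  {w | ∃ f ∈ M.accept, M.Steps (M.start, w) (f, [])}

/-- `M` accepts `w` by a computation with exactly `k` jumping steps. -/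
def AcceptsIn (M : DFAwtl Q V) (w : List V) (k : ℕ) : Prop :=
  ∃ f ∈ M.accept, M.StepsN (M.start, w) (f, []) k

/-- The jump complexity of a word: the (for a deterministic machine, unique)
number of jumping steps in an accepting computation on `w`. -/
noncomputable def jc (M : DFAwtl Q V) (w : List V) : ℕ :=
  sInf {k | M.AcceptsIn w k}

/-- The jump complexity function: the maximal number of jumps over accepted
words of length `n`. -/
noncomputable def JC (M : DFAwtl Q V) (n : ℕ) : ℕ :=
  sSup {k | ∃ w ∈ M.lang, w.length = n ∧ M.jc w = k}

/-- `JC_M` is bounded by a constant. -/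
def ConstBounded (M : DFAwtl Q V) : Prop :=
  ∃ c : ℕ, ∀ w ∈ M.lang, M.jc w ≤ c

/-- Extended (sequential) transition function on words. -/
def deltaStar (M : DFAwtl Q V) (q : Q) (w : List V) : Option Q :=
  w.foldl (fun o a => o.bind fun p => M.delta p a) (some q)

/-- A state `q` is `a`-deficient if `δ(q,a)` is undefined. -/
def Deficient (M : DFAwtl Q V) (q : Q) (a : V) : Prop :=
  M.delta q a = none

/-- The set `⟨q,a⟩` (empty when `δ(q,a)` is defined). -/
def angleSet (M : DFAwtl Q V) (q : Q) (a : V) : Set Q :=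
  {s | M.delta q a = none ∧ ∃ x : List V, x ≠ [] ∧
    M.SeqSteps (q, x) (s, []) ∧ M.Steps (s, a :: x) (q, [])}

/-- The set `[q,a]` (empty when `δ(q,a)` is defined). -/
def bracketSet (M : DFAwtl Q V) (q : Q) (a : V) : Set Q :=
  {s | M.delta q a = none ∧ ∃ x : List V, x ≠ [] ∧
    M.SeqSteps (q, x) (s, []) ∧ M.SeqSteps (s, a :: x) (q, [])}

/-- Every state of the automaton is useful. -/
def AllUseful (M : DFAwtl Q V) : Prop :=
  ∀ q : Q, (∃ x : List V, M.SeqSteps (M.start, x) (q, [])) ∧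
    (∃ (y : List V) (f : Q), f ∈ M.accept ∧ M.SeqSteps ((q : Q), y) (f, []))

/-- `δ(q,x')` is `a`-deficient for every prefix `x'` of `x`. -/
def PrefixDeficient (M : DFAwtl Q V) (q : Q) (a : V) (x : List V) : Prop :=
  ∀ x' : List V, ∀ p : Q, x' <+: x → M.deltaStar q x' = some p → M.delta p a = none

/-- `δ(q,y')` is `a`-deficient for every proper prefix `y'` of `y`. -/
def ProperPrefixDeficient (M : DFAwtl Q V) (q : Q) (a : V) (y : List V) : Prop :=
  ∀ y' : List V, ∀ p : Q, y' <+: y → y' ≠ y → M.deltaStar q y' = some p → M.delta p a = none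

/-- The condition of Claim 2: a pair `(q,a)` with `δ(q,a)` undefined, a nonempty
cycle in `q` visiting only `a`-deficient states, and an accepting path from `q`
reading a word `y` without `a` through `a`-deficient states and then an `a`. -/
def ClaimTwoCondition (M : DFAwtl Q V) (q : Q) (a : V) : Prop :=
  M.delta q a = none ∧
  (∃ x : List V, x ≠ [] ∧ M.SeqSteps (q, x) (q, []) ∧ M.PrefixDeficient q a x) ∧
  (∃ (y z : List V) (f : Q), a ∉ y ∧ f ∈ M.accept ∧
    M.SeqSteps (q, y ++ a :: z) (f, []) ∧ M.ProperPrefixDeficient q a y)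

end DFAwtl

namespace DFAwtl

variable {Q V : Type*}

/-- `p 0, p 1, …, p n = p 0` is a circuit in the transition graph of `M`,
with the `i`-th edge labelled by the letter `a i`. -/
def IsCircuit (M : DFAwtl Q V) (n : ℕ) (p : ℕ → Q) (a : ℕ → V) : Prop :=
  0 < n ∧ p n = p 0 ∧ ∀ i < n, M.delta (p i) (a i) = some (p (i + 1))

/-- The circuit is `x`-jumping: every state of the circuit from which an `x` is read
is `b`-deficient for some letter `b`, and at least one edge is labelled by a letter
other than `x`. -/
def IsXJumpingCircuit (M : DFAwtl Q V) (n : ℕ) (p : ℕ → Q) (a : ℕ → V) (x : V) : Prop :=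
  M.IsCircuit n p a ∧ (∀ i < n, a i = x → ∃ b : V, M.delta (p i) b = none) ∧
    ∃ i < n, a i ≠ x

/-- The state `q` is reachable from the initial state. -/
def ReachableState (M : DFAwtl Q V) (q : Q) : Prop :=
  ∃ u : List V, M.Steps (M.start, u) (q, [])

end DFAwtl
-- end preamble

/-- The DFAwtl over `{a,b}` (with `a = 0`, `b = 1`) with states `q₀ = 0`, `q₁ = 1`,
initial and final state `q₀`, `δ(q₀,a) = q₁`, `δ(q₁,b) = q₀`, and `δ(q₀,b)`,
`δ(q₁,a)` undefined. -/
def exampleM : DFAwtl (Fin 2) (Fin 2) :=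
  { delta := ![![some 1, none], ![none, some 0]]
    start := 0
    accept := {0} }

/-!
A step is determined by its configuration, because the translucent prefix it skips is the longest
prefix of unreadable letters; hence any accepting computation computes the jump complexity.

A jump leaves an unreadable letter at the head of the word. If every transition makes the
unreadable letters readable, as in `exampleM`, the head can then be read. Since the word is not
empty, a further step follows, and it is sequential. So jumps make up at most half of the steps,
of which there are as many as letters. On `bⁿaⁿ` jumps and sequential steps strictly alternate.

Parity of the length comes from a potential on states: weighing each letter by `1 : ZMod 2`, the
potential of the state plus the weight of the remaining word is constant along a computation.
-/

namespace DFAwtl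

variable {Q V : Type*} {M : DFAwtl Q V} {c c' d d' : Q × List V} {k l : ℕ}

section Determinism

/-- The step reading the first letter after the translucent prefix `x`: a sequential step when
`x = ε`, and a jumping step otherwise. -/
def StepOver (M : DFAwtl Q V) (x : List V) (c c' : Q × List V) : Prop :=
  ∃ (a : V) (y : List V), c.2 = x ++ a :: y ∧ c'.2 = x ++ y ∧
    M.delta c.1 a = some c'.1 ∧ ∀ b ∈ x, M.delta c.1 b = none

theorem seqStep_iff_stepOver_nil : M.SeqStep c c' ↔ M.StepOver [] c c' := by
  simp [SeqStep, StepOver, and_comm, and_left_comm]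

theorem jumpStep_iff_exists_stepOver : M.JumpStep c c' ↔ ∃ x ≠ [], M.StepOver x c c' := by
  constructor
  · rintro ⟨x, y, a, hx, h⟩
    exact ⟨x, hx, a, y, h⟩
  · rintro ⟨x, hx, a, y, h⟩
    exact ⟨x, y, a, hx, h⟩

theorem step_iff_exists_stepOver : M.Step c c' ↔ ∃ x, M.StepOver x c c' := by
  rw [Step, seqStep_iff_stepOver_nil, jumpStep_iff_exists_stepOver]
  constructor
  · rintro (h | ⟨x, -, h⟩)
    exacts [⟨[], h⟩, ⟨x, h⟩]
  · rintro ⟨x, h⟩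
    rcases eq_or_ne x [] with rfl | hx
    exacts [.inl h, .inr ⟨x, hx, h⟩]

theorem StepOver.length_eq {x : List V} (h : M.StepOver x c c') :
    c.2.length = c'.2.length + 1 := by
  obtain ⟨a, y, hc, hc', -⟩ := h
  simp [hc, hc', add_assoc]

theorem StepOver.word_ne_nil {x : List V} (h : M.StepOver x c c') : c.2 ≠ [] :=
  List.ne_nil_of_length_eq_add_one h.length_eq

theorem StepOver.takeWhile_eq {x : List V} (h : M.StepOver x c c') :
    c.2.takeWhile (fun b => (M.delta c.1 b).isNone) = x := by
  obtain ⟨a, y, hc, -, ha, hx⟩ := h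
  rw [hc, List.takeWhile_append_of_pos (by simpa using hx),
    List.takeWhile_cons_of_neg (by simp [ha]), List.append_nil]

theorem StepOver.unique {x y : List V} (hc : M.StepOver x c c') (hd : M.StepOver y c d) :
    x = y ∧ c' = d := by
  obtain rfl : x = y := hc.takeWhile_eq.symm.trans hd.takeWhile_eq
  obtain ⟨a, u, hau, hc', ha, -⟩ := hc
  obtain ⟨b, v, hbv, hd', hb, -⟩ := hd
  obtain ⟨rfl, rfl⟩ : a = b ∧ u = v := by simpa using hau.symm.trans hbv
  exact ⟨rfl, Prod.ext (Option.some_inj.1 (ha.symm.trans hb)) (hc'.trans hd'.symm)⟩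

theorem StepsN.jumps_unique (hk : M.StepsN c d k) (hl : M.StepsN c d' l)
    (hd : d.2 = []) (hd' : d'.2 = []) : k = l := by
  induction hk generalizing l with
  | refl =>
    cases hl with
    | refl => rfl
    | seq h => exact absurd hd (seqStep_iff_stepOver_nil.1 h).word_ne_nil
    | jump h =>
      obtain ⟨x, -, hx⟩ := jumpStep_iff_exists_stepOver.1 h
      exact absurd hd hx.word_ne_nil
  | seq h _ ih =>
    have h := seqStep_iff_stepOver_nil.1 h
    cases hl with
    | refl => exact absurd hd' h.word_ne_nil
    | seq h' hl =>
      obtain ⟨-, rfl⟩ := h.unique (seqStep_iff_stepOver_nil.1 h')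
      exact ih hl hd
    | jump h' =>
      obtain ⟨x, hx, h'⟩ := jumpStep_iff_exists_stepOver.1 h'
      exact absurd (h'.unique h).1 hx
  | jump h _ ih =>
    obtain ⟨x, hx, h⟩ := jumpStep_iff_exists_stepOver.1 h
    cases hl with
    | refl => exact absurd hd' h.word_ne_nil
    | seq h' => exact absurd (h.unique (seqStep_iff_stepOver_nil.1 h')).1 hx
    | jump h' hl =>
      obtain ⟨y, -, h'⟩ := jumpStep_iff_exists_stepOver.1 h'
      obtain ⟨-, rfl⟩ := h.unique h'
      rw [ih hl hd]

end Determinism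

section JumpComplexity

variable {w : List V}

theorem steps_iff_exists_stepsN : M.Steps c d ↔ ∃ k, M.StepsN c d k := by
  constructor
  · intro h
    induction h using Relation.ReflTransGen.head_induction_on with
    | refl => exact ⟨0, .refl _⟩
    | head hs _ ih =>
      obtain ⟨k, hk⟩ := ih
      exact hs.elim (fun hs => ⟨k, .seq hs hk⟩) (fun hs => ⟨k + 1, .jump hs hk⟩)
  · rintro ⟨k, h⟩
    induction h with
    | refl => exact .refl
    | seq hs _ ih => exact .head (.inl hs) ih
    | jump hs _ ih => exact .head (.inr hs) ih

theorem mem_lang_iff_exists_acceptsIn : w ∈ M.lang ↔ ∃ k, M.AcceptsIn w k := by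
  simp only [lang, AcceptsIn, Set.mem_ofPred_eq, steps_iff_exists_stepsN]
  tauto

theorem AcceptsIn.jc_eq (h : M.AcceptsIn w k) : M.jc w = k := by
  have hjc : M.AcceptsIn w (M.jc w) := Nat.sInf_mem (s := {l | M.AcceptsIn w l}) ⟨k, h⟩
  obtain ⟨f, -, hf⟩ := hjc
  obtain ⟨g, -, hg⟩ := h
  exact hf.jumps_unique hg rfl rfl

theorem JC_length_eq_jc (hw : w ∈ M.lang)
    (hmax : ∀ v ∈ M.lang, v.length = w.length → M.jc v ≤ M.jc w) :
    M.JC w.length = M.jc w := by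
  have hgreatest : IsGreatest {k | ∃ v ∈ M.lang, v.length = w.length ∧ M.jc v = k} (M.jc w) :=
    ⟨⟨w, hw, rfl, rfl⟩, by rintro k ⟨v, hv, hlen, rfl⟩; exact hmax v hv hlen⟩
  exact hgreatest.csSup_eq

end JumpComplexity

section AlternatingJumps

theorem StepsN.two_mul_jumps_le_length_and_lt_of_head_readable
    (hM : ∀ ⦃q a p b⦄, M.delta q a = some p → M.Deficient q b → ¬ M.Deficient p b)
    (h : M.StepsN c d k) (hd : d.2 = []) :
    2 * k ≤ c.2.length ∧ ∀ b ∈ c.2.head?, ¬ M.Deficient c.1 b → 2 * k < c.2.length := by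
  induction h with
  | refl => simp [hd]
  | seq hs _ ih =>
    have hlen := (seqStep_iff_stepOver_nil.1 hs).length_eq
    have hrest := (ih hd).1
    exact ⟨by omega, fun _ _ _ => by omega⟩
  | jump hs _ ih =>
    obtain ⟨x, hx, hs⟩ := jumpStep_iff_exists_stepOver.1 hs
    have hlen := hs.length_eq
    obtain ⟨a, y, hc, hc', ha, hnone⟩ := hs
    obtain ⟨b, x, rfl⟩ := List.exists_cons_of_ne_nil hx
    have hb : M.Deficient _ b := hnone b List.mem_cons_self
    have hrest := (ih hd).2 b (by simp [hc']) (hM ha hb)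
    refine ⟨by omega, fun b' hb' hread => absurd ?_ hread⟩
    obtain rfl : b = b' := by simpa [hc] using hb'
    exact hb

theorem AcceptsIn.two_mul_jumps_le_length {w : List V}
    (hM : ∀ ⦃q a p b⦄, M.delta q a = some p → M.Deficient q b → ¬ M.Deficient p b)
    (h : M.AcceptsIn w k) : 2 * k ≤ w.length := by
  obtain ⟨f, -, hf⟩ := h
  exact (hf.two_mul_jumps_le_length_and_lt_of_head_readable hM rfl).1

end AlternatingJumps

section Potential

variable {A : Type*} [AddCommMonoid A] {π : Q → A} {φ : V → A}

theorem Steps.potential_add_sum_eq (hπ : ∀ ⦃q a p⦄, M.delta q a = some p → π q + φ a = π p)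
    (h : M.Steps c d) : π c.1 + (c.2.map φ).sum = π d.1 + (d.2.map φ).sum := by
  induction h with
  | refl => rfl
  | tail _ hs ih =>
    obtain ⟨x, a, y, hc, hc', ha, -⟩ := step_iff_exists_stepOver.1 hs
    simp only [ih, hc, hc', ← hπ ha, List.map_append, List.map_cons, List.sum_append,
      List.sum_cons]
    abel

theorem even_length_of_mem_lang {w : List V} {π : Q → ZMod 2}
    (hπ : ∀ ⦃q a p⦄, M.delta q a = some p → π q + 1 = π p)
    (haccept : ∀ f ∈ M.accept, π f = π M.start) (hw : w ∈ M.lang) : Even w.length := by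
  obtain ⟨f, hf, hsteps⟩ := hw
  have hsum := Steps.potential_add_sum_eq (φ := fun _ => (1 : ZMod 2)) hπ hsteps
  rw [← ZMod.natCast_eq_zero_iff_even]
  simpa [haccept f hf] using hsum

end Potential

theorem StepsN.replicate_append_replicate {q p : Q} {a b : V} (ha : M.delta q a = some p)
    (hb : M.delta p b = some q) (hqb : M.Deficient q b) (n : ℕ) :
    M.StepsN (q, List.replicate n b ++ List.replicate n a) (q, []) n := by
  induction n with
  | zero => exact .refl _
  | succ n ih =>
    have hjump : M.JumpStep (q, List.replicate (n + 1) b ++ List.replicate (n + 1) a)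
        (p, List.replicate (n + 1) b ++ List.replicate n a) :=
      ⟨List.replicate (n + 1) b, List.replicate n a, a, by simp, rfl, rfl, ha,
        fun _ hmem => List.eq_of_mem_replicate hmem ▸ hqb⟩
    have hread : M.SeqStep (p, List.replicate (n + 1) b ++ List.replicate n a)
        (q, List.replicate n b ++ List.replicate n a) := ⟨b, rfl, hb⟩
    exact .jump hjump (.seq hread ih)

end DFAwtl

theorem exampleM_not_deficient_of_delta_eq_some ⦃q a p b : Fin 2⦄
    (ha : exampleM.delta q a = some p) (hb : exampleM.Deficient q b) :
    ¬ exampleM.Deficient p b := by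
  revert q a p b
  unfold DFAwtl.Deficient exampleM
  decide

theorem exampleM_val_add_one_eq_of_delta_eq_some ⦃q a p : Fin 2⦄ (h : exampleM.delta q a = some p) :
    (q.val : ZMod 2) + 1 = p.val := by
  revert q a p
  unfold exampleM
  decide

theorem exampleM_acceptsIn_replicate_append_replicate (n : ℕ) :
    exampleM.AcceptsIn (List.replicate n 1 ++ List.replicate n 0) n :=
  have hdeficient : exampleM.Deficient 0 1 := by
    rw [DFAwtl.Deficient]
    rfl
  ⟨0, rfl, .replicate_append_replicate (p := 1) rfl rfl hdeficient n⟩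

/-- for every `n`: `jc_M(bⁿaⁿ) = n`; every accepted word of length `2n`
has jump complexity at most `n` (and at least `0`); `JC_M(2n) = n`; and `JC_M` is
undefined on odd lengths, i.e. every accepted word has even length. -/
theorem stmt_15 (n : ℕ) :
    exampleM.jc (List.replicate n 1 ++ List.replicate n 0) = n ∧
    (∀ w ∈ exampleM.lang, w.length = 2 * n → exampleM.jc w ≤ n) ∧
    exampleM.JC (2 * n) = n ∧
    (∀ w ∈ exampleM.lang, Even w.length) := by
  have haccept := exampleM_acceptsIn_replicate_append_replicate n
  have hmem := DFAwtl.mem_lang_iff_exists_acceptsIn.2 ⟨n, haccept⟩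
  have hlength : (List.replicate n (1 : Fin 2) ++ List.replicate n 0).length = 2 * n := by
    simp [two_mul]
  have hupper : ∀ w ∈ exampleM.lang, w.length = 2 * n → exampleM.jc w ≤ n := by
    intro w hw hwn
    obtain ⟨k, hk⟩ := DFAwtl.mem_lang_iff_exists_acceptsIn.1 hw
    have hk_le := hk.two_mul_jumps_le_length exampleM_not_deficient_of_delta_eq_some
    rw [hk.jc_eq]
    omega
  refine ⟨haccept.jc_eq, hupper, ?_, fun w hw =>
    DFAwtl.even_length_of_mem_lang exampleM_val_add_one_eq_of_delta_eq_some
      (by rintro f rfl; rfl) hw⟩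
  rw [← hlength, DFAwtl.JC_length_eq_jc hmem, haccept.jc_eq]
  simpa only [hlength, haccept.jc_eq] using hupper
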